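/- Let S be a nonempty finite set of positive integers such that for every subset T of S of odd cardinality the product ∏_{z ∈ T} z is not a perfect square, and let d be the GF(2)-dimension attached to S as in the context. Then the set of odd primes p such that χ_p(z) = -1 for every z ∈ S has natural density 2^{-d} in the primes. -/

import Mathlib

/-!
Modulo a prime `p` not dividing `2 ∏ z`, the product `∏ (1 - J(z | p))` over the `n` members `z`
of the family is `2 ^ n` if all of them are nonresidues and `0` otherwise. It expands into
`∑ (-1) ^ |T| J(∏ T | p)` over the subfamilies `T`, and over the primes `p` the mean of `J(m | p)`
is `1` if `m` is a square and `0` otherwise. By hypothesis only `T` of even size have square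
product, so the density is `2 ^ (-n)` times the number of such `T`. Square products correspond to
`GF(2)`-linear relations between the parity vectors, of which there are `2 ^ (n - d)`.

For nonsquare `m`, the map `J(m | ·)` is a nontrivial character modulo `4 m`, so its mean vanishes
by the equidistribution of primes among the invertible residue classes. That follows from the
continuity of the relevant `L`-functions on `1 ≤ re s` by the Wiener–Ikehara theorem: averaging
against Fejér kernels of shrinking width turns the continuity into convergence of smoothed means,
by the Riemann–Lebesgue lemma, and the positivity of the coefficients removes the smoothing.
-/

open Filter MeasureTheory Set Topology

section Tauberian

variable {B K : ℝ → ℝ} {A M : ℝ}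

lemma measurable_of_monotone_mul_exp (hB : Monotone fun u => B u * Real.exp u) :
    Measurable B := by
  have h : B = fun u => B u * Real.exp u / Real.exp u := by
    ext u
    rw [mul_div_cancel_right₀ _ (Real.exp_ne_zero u)]
  rw [h]
  exact hB.measurable.div Real.measurable_exp

lemma le_mul_exp_of_monotone_mul_exp (hB0 : 0 ≤ B) (hB : Monotone fun u => B u * Real.exp u)
    {u w c : ℝ} (huw : u ≤ w) (hwc : w ≤ u + c) : B u ≤ B w * Real.exp c := by
  refine le_of_mul_le_mul_right ?_ (Real.exp_pos u)
  calc B u * Real.exp u ≤ B w * Real.exp w := hB huw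
    _ ≤ B w * Real.exp (c + u) :=
      mul_le_mul_of_nonneg_left (Real.exp_le_exp.2 (by linarith)) (hB0 w)
    _ = B w * Real.exp c * Real.exp u := by rw [Real.exp_add, mul_assoc]

lemma integrable_comp_sub_div_mul (hBm : Measurable B) (hB0 : 0 ≤ B) (hBM : ∀ u, B u ≤ M)
    (hK : Integrable K) (v l : ℝ) : Integrable fun w => B (v - w / l) * K w := by
  refine hK.bdd_mul (c := M) (hBm.comp (by fun_prop)).aestronglyMeasurable ?_
  exact .of_forall fun w => (Real.norm_of_nonneg (hB0 _)).trans_le (hBM _)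

lemma abs_div_sq_le_inv {R w : ℝ} (hR : 0 < R) (hw : w ∈ Ioc (-R) R) : |w / R ^ 2| ≤ R⁻¹ := by
  rw [abs_div, abs_of_pos (by positivity : 0 < R ^ 2), div_le_iff₀ (by positivity)]
  have hRR : R⁻¹ * R ^ 2 = R := by field_simp
  exact hRR.symm ▸ abs_le.2 ⟨hw.1.le, hw.2⟩

lemma mul_setIntegral_kernel_le (hB0 : 0 ≤ B) (hBM : ∀ u, B u ≤ M)
    (hB : Monotone fun u => B u * Real.exp u) (hK0 : 0 ≤ K) (hK : Integrable K)
    {R : ℝ} (hR : 0 < R) (v : ℝ) :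
    B v * ∫ w in Ioc (-R) R, K w ≤
      (∫ w, B (v + R⁻¹ - w / R ^ 2) * K w) * Real.exp (2 * R⁻¹) := by
  have hint : Integrable fun w => B (v + R⁻¹ - w / R ^ 2) * K w :=
    integrable_comp_sub_div_mul (measurable_of_monotone_mul_exp hB) hB0 hBM hK _ _
  calc B v * ∫ w in Ioc (-R) R, K w = ∫ w in Ioc (-R) R, B v * K w :=
        (integral_const_mul _ _).symm
    _ ≤ ∫ w in Ioc (-R) R, B (v + R⁻¹ - w / R ^ 2) * K w * Real.exp (2 * R⁻¹) := by
      refine setIntegral_mono_on (hK.const_mul _).integrableOn (hint.mul_const _).integrableOn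
        measurableSet_Ioc fun w hw => ?_
      obtain ⟨hw₁, hw₂⟩ := abs_le.1 (abs_div_sq_le_inv hR hw)
      rw [mul_right_comm]
      exact mul_le_mul_of_nonneg_right
        (le_mul_exp_of_monotone_mul_exp hB0 hB (by linarith) (by linarith)) (hK0 w)
    _ = (∫ w in Ioc (-R) R, B (v + R⁻¹ - w / R ^ 2) * K w) * Real.exp (2 * R⁻¹) :=
      integral_mul_const _ _
    _ ≤ (∫ w, B (v + R⁻¹ - w / R ^ 2) * K w) * Real.exp (2 * R⁻¹) :=
      mul_le_mul_of_nonneg_right (setIntegral_le_integral hint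
        (.of_forall fun w => mul_nonneg (hB0 _) (hK0 w))) (Real.exp_nonneg _)

lemma integral_kernel_le (hB0 : 0 ≤ B) (hBM : ∀ u, B u ≤ M)
    (hB : Monotone fun u => B u * Real.exp u) (hK0 : 0 ≤ K) (hK : Integrable K)
    {R : ℝ} (hR : 0 < R) (v : ℝ) :
    ∫ w, B (v + -R⁻¹ - w / R ^ 2) * K w ≤
      B v * Real.exp (2 * R⁻¹) * (∫ w in Ioc (-R) R, K w) + M * ∫ w in (Ioc (-R) R)ᶜ, K w := by
  have hint : Integrable fun w => B (v + -R⁻¹ - w / R ^ 2) * K w :=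
    integrable_comp_sub_div_mul (measurable_of_monotone_mul_exp hB) hB0 hBM hK _ _
  rw [← integral_add_compl measurableSet_Ioc hint, ← integral_const_mul, ← integral_const_mul]
  refine add_le_add
    (setIntegral_mono_on hint.integrableOn (hK.const_mul _).integrableOn measurableSet_Ioc
      fun w hw => ?_)
    (setIntegral_mono hint.integrableOn (hK.const_mul _).integrableOn
      fun w => mul_le_mul_of_nonneg_right (hBM _) (hK0 w))
  obtain ⟨hw₁, hw₂⟩ := abs_le.1 (abs_div_sq_le_inv hR hw)
  exact mul_le_mul_of_nonneg_right
    (le_mul_exp_of_monotone_mul_exp hB0 hB (by linarith) (by linarith)) (hK0 w)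

lemma tendsto_setIntegral_Ioc_neg (hK : Integrable K) :
    Tendsto (fun R => ∫ w in Ioc (-R) R, K w) atTop (𝓝 (∫ w, K w)) := by
  refine (intervalIntegral_tendsto_integral hK tendsto_neg_atTop_atBot tendsto_id).congr' ?_
  filter_upwards [eventually_ge_atTop 0] with R hR
  exact intervalIntegral.integral_of_le (neg_le_self hR)

lemma tendsto_setIntegral_compl_Ioc_neg (hK : Integrable K) :
    Tendsto (fun R => ∫ w in (Ioc (-R) R)ᶜ, K w) atTop (𝓝 0) := by
  have h := (tendsto_setIntegral_Ioc_neg hK).const_sub (∫ w, K w)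
  rw [sub_self] at h
  refine h.congr fun R => ?_
  rw [sub_eq_iff_eq_add', integral_add_compl measurableSet_Ioc hK]

lemma tendsto_exp_two_mul_inv : Tendsto (fun R : ℝ => Real.exp (2 * R⁻¹)) atTop (𝓝 1) := by
  simpa [Function.comp_def] using
    (Real.continuous_exp.tendsto _).comp ((tendsto_inv_atTop_zero (𝕜 := ℝ)).const_mul 2)

/- Averaging against the kernel concentrated at scale `R⁻²` controls `B` at one point: over a
window of length `2 / R` the function `B` can drop by a factor of at most `exp (2 / R)`. -/
theorem tendsto_of_tendsto_kernel_average (hB0 : 0 ≤ B) (hBM : ∀ u, B u ≤ M)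
    (hB : Monotone fun u => B u * Real.exp u) (hK0 : 0 ≤ K) (hK : Integrable K)
    (hKpos : 0 < ∫ w, K w)
    (hlim : ∀ l, 0 < l → Tendsto (fun v => ∫ w, B (v - w / l) * K w) atTop
      (𝓝 (A * ∫ w, K w))) :
    Tendsto B atTop (𝓝 A) := by
  have hmass := tendsto_setIntegral_Ioc_neg hK
  have htail := tendsto_setIntegral_compl_Ioc_neg hK
  have hmass_pos : ∀ᶠ R in atTop, 0 < ∫ w in Ioc (-R) R, K w := hmass.eventually_const_lt hKpos
  have hshift (R c : ℝ) (hR : 0 < R) : Tendsto (fun v => ∫ w, B (v + c - w / R ^ 2) * K w)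
      atTop (𝓝 (A * ∫ w, K w)) :=
    (hlim (R ^ 2) (by positivity)).comp (tendsto_atTop_add_const_right _ c tendsto_id)
  refine tendsto_order.2 ⟨fun b hb => ?_, fun b hb => ?_⟩
  · have hsmall : ∀ᶠ R in atTop, b * Real.exp (2 * R⁻¹) * (∫ w in Ioc (-R) R, K w) +
        M * (∫ w in (Ioc (-R) R)ᶜ, K w) < A * ∫ w, K w := by
      refine Tendsto.eventually_lt_const ?_
        (((tendsto_exp_two_mul_inv.const_mul b).mul hmass).add (htail.const_mul M))
      rw [mul_one, mul_zero, add_zero]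
      exact mul_lt_mul_of_pos_right hb hKpos
    obtain ⟨R, hRsmall, hRmass, hR⟩ := (hsmall.and (hmass_pos.and (eventually_gt_atTop 0))).exists
    filter_upwards [(hshift R (-R⁻¹) hR).eventually_const_lt hRsmall] with v hv
    have hlow := hv.trans_le (integral_kernel_le hB0 hBM hB hK0 hK hR v)
    rw [add_lt_add_iff_right] at hlow
    exact lt_of_mul_lt_mul_right (lt_of_mul_lt_mul_right hlow hRmass.le) (Real.exp_nonneg _)
  · have hlarge : ∀ᶠ R in atTop, A * (∫ w, K w) * Real.exp (2 * R⁻¹) <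
        b * ∫ w in Ioc (-R) R, K w := by
      refine (tendsto_exp_two_mul_inv.const_mul _).eventually_lt (hmass.const_mul b) ?_
      rw [mul_one]
      exact mul_lt_mul_of_pos_right hb hKpos
    obtain ⟨R, hRlarge, hRmass, hR⟩ := (hlarge.and (hmass_pos.and (eventually_gt_atTop 0))).exists
    filter_upwards [((hshift R R⁻¹ hR).mul_const _).eventually_lt_const hRlarge] with v hv
    exact lt_of_mul_lt_mul_right
      ((mul_setIntegral_kernel_le hB0 hBM hB hK0 hK hR v).trans_lt hv) hRmass.le

end Tauberian

section FejerKernel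

/-- The Fejér kernel `(sin (u / 2) / (u / 2)) ^ 2`, the Fourier transform of the triangle function
`1 - |t|` on `[-1, 1]`; at `u = 0` it takes its limiting value `1`. -/
noncomputable def fejerKernel (u : ℝ) : ℝ := Real.sinc (u / 2) ^ 2

lemma fejerKernel_zero : fejerKernel 0 = 1 := by
  rw [fejerKernel, zero_div, Real.sinc_zero, one_pow]

lemma fejerKernel_of_ne_zero {u : ℝ} (hu : u ≠ 0) :
    fejerKernel u = 2 * (1 - Real.cos u) / u ^ 2 := by
  rw [fejerKernel, Real.sinc_of_ne_zero (div_ne_zero hu two_ne_zero), div_pow,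
    Real.sin_sq_eq_half_sub, mul_div_cancel₀ u two_ne_zero]
  field_simp

lemma fejerKernel_nonneg : 0 ≤ fejerKernel := fun _ => sq_nonneg _

lemma continuous_fejerKernel : Continuous fejerKernel :=
  (Real.continuous_sinc.comp (continuous_id.div_const 2)).pow 2

lemma fejerKernel_le (u : ℝ) : fejerKernel u ≤ 5 * (1 + u ^ 2)⁻¹ := by
  have hsinc : fejerKernel u ≤ 1 := (sq_le_one_iff_abs_le_one _).2 (Real.abs_sinc_le_one _)
  have hdecay : fejerKernel u * u ^ 2 ≤ 4 := by
    rcases eq_or_ne u 0 with rfl | hu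
    · norm_num
    · rw [fejerKernel_of_ne_zero hu, div_mul_cancel₀ _ (pow_ne_zero 2 hu)]
      linarith [Real.neg_one_le_cos u]
  rw [← div_eq_mul_inv, le_div_iff₀ (by positivity)]
  linarith

lemma integrable_fejerKernel : Integrable fejerKernel :=
  (integrable_inv_one_add_sq.const_mul 5).mono' continuous_fejerKernel.aestronglyMeasurable
    (.of_forall fun u => (Real.norm_of_nonneg (fejerKernel_nonneg u)).trans_le (fejerKernel_le u))

lemma integral_fejerKernel_pos : 0 < ∫ u, fejerKernel u :=
  integral_pos_of_integrable_nonneg_nonzero (x := 0) continuous_fejerKernel integrable_fejerKernel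
    fejerKernel_nonneg (fejerKernel_zero ▸ one_ne_zero)

lemma integral_one_sub_mul_cos (u : ℝ) :
    ∫ t in (0 : ℝ)..1, (1 - t) * (2 * Real.cos (t * u)) = fejerKernel u := by
  rcases eq_or_ne u 0 with rfl | hu
  · simp only [mul_zero, Real.cos_zero, mul_one, intervalIntegral.integral_mul_const,
      fejerKernel_zero]
    rw [intervalIntegral.integral_sub (by simp) (by simp)]
    norm_num
  have hderiv (t : ℝ) : HasDerivAt
      (fun t => (1 - t) * (2 * Real.sin (t * u) / u) - 2 * Real.cos (t * u) / u ^ 2)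
      ((1 - t) * (2 * Real.cos (t * u))) t := by
    have hlin : HasDerivAt (fun t => t * u) u t := hasDerivAt_mul_const u
    have hsin := (hlin.sin.const_mul 2).div_const u
    have hcos := (hlin.cos.const_mul 2).div_const (u ^ 2)
    refine ((((hasDerivAt_id t).const_sub 1).mul hsin).sub hcos).congr_deriv ?_
    simp only [id_eq]
    field_simp
    ring
  rw [intervalIntegral.integral_eq_sub_of_hasDerivAt (fun t _ => hderiv t)
    (Continuous.intervalIntegrable (by fun_prop) _ _), fejerKernel_of_ne_zero hu]
  simp only [sub_self, zero_mul, one_mul, Real.sin_zero, Real.cos_zero, mul_zero, zero_div]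
  ring

lemma integral_one_sub_abs_mul_cexp (u : ℝ) :
    ∫ t in (-1 : ℝ)..1, ((1 - |t| : ℝ) : ℂ) * Complex.exp (Complex.I * t * u) = fejerKernel u := by
  have hint (a b : ℝ) : IntervalIntegrable
      (fun t : ℝ => ((1 - |t| : ℝ) : ℂ) * Complex.exp (Complex.I * t * u)) volume a b :=
    Continuous.intervalIntegrable (by fun_prop) _ _
  have hneg : ∫ t in (-1 : ℝ)..0, ((1 - |t| : ℝ) : ℂ) * Complex.exp (Complex.I * t * u) =
      ∫ t in (0 : ℝ)..1, ((1 - |t| : ℝ) : ℂ) * Complex.exp (-(Complex.I * t * u)) := by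
    rw [← neg_zero, ← intervalIntegral.integral_comp_neg]
    simp
  rw [← intervalIntegral.integral_add_adjacent_intervals (hint (-1) 0) (hint 0 1), hneg,
    ← intervalIntegral.integral_add (Continuous.intervalIntegrable (by fun_prop) _ _) (hint 0 1),
    ← integral_one_sub_mul_cos, ← intervalIntegral.integral_ofReal]
  refine intervalIntegral.integral_congr fun t ht => ?_
  rw [uIcc_of_le zero_le_one] at ht
  have hcos : 2 * Complex.cos (t * u) =
      Complex.exp (Complex.I * t * u) + Complex.exp (-(Complex.I * t * u)) := by
    rw [Complex.two_cos]
    ring_nf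
  simp only [abs_of_nonneg ht.1]
  push_cast
  rw [hcos]
  ring

end FejerKernel

section Laplace

/-- The Laplace transform `∫₀^∞ f u e^{-su} du`; only values at points of convergence are
meaningful. -/
noncomputable def laplaceTransform (f : ℝ → ℂ) (s : ℂ) : ℂ :=
  ∫ u in Ioi (0 : ℝ), f u * Complex.exp (-s * u)

variable {f : ℝ → ℂ} {G : ℂ → ℂ} {M : ℝ}

lemma integrable_laplace_integrand_prod (hf : Measurable f) (hfM : ∀ u, ‖f u‖ ≤ M) {δ : ℝ}
    (hδ : 0 < δ) {φ : ℝ → ℂ} {a b : ℝ} (hφ : IntegrableOn φ (Ioc a b)) :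
    Integrable (Function.uncurry fun t u : ℝ =>
        φ t * (f u * Complex.exp (-(δ + Complex.I * t) * u)))
      ((volume.restrict (Ioc a b)).prod (volume.restrict (Ioi 0))) := by
  have hexp : IntegrableOn (fun u => (M : ℂ) * (Real.exp (-δ * u) : ℝ)) (Ioi 0) :=
    (integrableOn_exp_mul_Ioi (neg_lt_zero.2 hδ) 0).ofReal.const_mul _
  have hbound := Integrable.mul_prod hφ hexp
  refine hbound.mono ?_ (.of_forall fun z => ?_)
  · exact hφ.aestronglyMeasurable.comp_fst.mul (by fun_prop)
  · have hexp : ‖Complex.exp (-(δ + Complex.I * z.1) * z.2)‖ = Real.exp (-δ * z.2) := by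
      simp [Complex.norm_exp]
    simp only [Function.uncurry_def, norm_mul, hexp, Complex.norm_real, Real.norm_eq_abs,
      Real.abs_exp]
    gcongr
    exact (hfM z.2).trans (le_abs_self M)

lemma setIntegral_mul_exp_mul_fejerKernel (hf : Measurable f) (hfM : ∀ u, ‖f u‖ ≤ M) {δ : ℝ}
    (hδ : 0 < δ) (v : ℝ) :
    ∫ u in Ioi (0 : ℝ), f u * (Real.exp (-δ * u) * fejerKernel (v - u) : ℝ) =
      ∫ t in (-1 : ℝ)..1, ((1 - |t| : ℝ) : ℂ) * Complex.exp (Complex.I * t * v) *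
        laplaceTransform f (δ + Complex.I * t) := by
  have hφ : IntegrableOn (fun t : ℝ => ((1 - |t| : ℝ) : ℂ) * Complex.exp (Complex.I * t * v))
      (Ioc (-1) 1) := (Continuous.intervalIntegrable (by fun_prop) (-1) 1).1
  simp only [laplaceTransform, ← integral_const_mul]
  rw [intervalIntegral.integral_of_le (by norm_num),
    integral_integral_swap (integrable_laplace_integrand_prod hf hfM hδ hφ)]
  refine integral_congr_ae (.of_forall fun u => ?_)
  simp only
  rw [← intervalIntegral.integral_of_le (by norm_num), Complex.ofReal_mul,
    ← integral_one_sub_abs_mul_cexp, ← mul_assoc, ← intervalIntegral.integral_const_mul]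
  refine intervalIntegral.integral_congr fun t _ => ?_
  have hexp : Complex.exp (Complex.I * t * v) * Complex.exp (-(δ + Complex.I * t) * u) =
      (Real.exp (-δ * u) : ℝ) * Complex.exp (Complex.I * t * (v - u : ℝ)) := by
    rw [Complex.ofReal_exp, ← Complex.exp_add, ← Complex.exp_add]
    push_cast
    ring_nf
  linear_combination -((1 - |t| : ℝ) : ℂ) * f u * hexp

lemma tendsto_setIntegral_mul_exp_mul_fejerKernel (hf : Measurable f) (hfM : ∀ u, ‖f u‖ ≤ M)
    (v : ℝ) :
    Tendsto (fun δ => ∫ u in Ioi (0 : ℝ), f u * (Real.exp (-δ * u) * fejerKernel (v - u) : ℝ))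
      (𝓝[>] 0) (𝓝 (∫ u in Ioi (0 : ℝ), f u * fejerKernel (v - u))) := by
  have hK := continuous_fejerKernel.measurable
  refine tendsto_integral_filter_of_dominated_convergence (fun u => M * fejerKernel (v - u))
    (.of_forall fun δ => (by fun_prop)) ?_
    ((integrable_fejerKernel.comp_sub_left v).const_mul M).integrableOn (.of_forall fun u => ?_)
  · filter_upwards [self_mem_nhdsWithin] with δ hδ
    refine (ae_restrict_iff' measurableSet_Ioi).2 (.of_forall fun u hu => ?_)
    have hexp : Real.exp (-δ * u) ≤ 1 :=
      Real.exp_le_one_iff.2 (by nlinarith [mem_Ioi.1 hδ, mem_Ioi.1 hu])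
    rw [norm_mul, Complex.norm_real, Real.norm_of_nonneg
      (mul_nonneg (Real.exp_nonneg _) (fejerKernel_nonneg _))]
    exact mul_le_mul (hfM u) (mul_le_of_le_one_left (fejerKernel_nonneg _) hexp)
      (mul_nonneg (Real.exp_nonneg _) (fejerKernel_nonneg _)) ((norm_nonneg _).trans (hfM u))
  · have hcont : Continuous fun δ => f u * (Real.exp (-δ * u) * fejerKernel (v - u) : ℝ) := by
      fun_prop
    simpa using (hcont.tendsto 0).mono_left nhdsWithin_le_nhds

lemma tendsto_intervalIntegral_mul_right_edge (hG : ContinuousOn G {s | 0 ≤ s.re}) {φ : ℝ → ℂ}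
    (hφ : Continuous φ) (a b : ℝ) :
    Tendsto (fun δ : ℝ => ∫ t in a..b, φ t * G (δ + Complex.I * t)) (𝓝[>] 0)
      (𝓝 (∫ t in a..b, φ t * G (Complex.I * t))) := by
  have hGmax : Continuous fun z : ℝ × ℝ => G ((max z.1 0 : ℝ) + Complex.I * z.2) :=
    hG.comp_continuous (by fun_prop) fun z => by simp
  have hcont : Continuous fun δ => ∫ t in a..b, φ t * G ((max δ 0 : ℝ) + Complex.I * t) :=
    intervalIntegral.continuous_parametric_intervalIntegral_of_continuous'
      ((hφ.comp continuous_snd).mul hGmax) a b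
  have hlim := (hcont.tendsto 0).mono_left (nhdsWithin_le_nhds (s := Ioi 0))
  simp only [max_self, Complex.ofReal_zero, zero_add] at hlim
  refine hlim.congr' ?_
  filter_upwards [self_mem_nhdsWithin] with δ hδ
  rw [max_eq_left (mem_Ioi.1 hδ).le]

lemma setIntegral_mul_fejerKernel (hf : Measurable f) (hfM : ∀ u, ‖f u‖ ≤ M)
    (hG : ContinuousOn G {s | 0 ≤ s.re}) (hfG : ∀ s : ℂ, 0 < s.re → laplaceTransform f s = G s)
    (v : ℝ) :
    ∫ u in Ioi (0 : ℝ), f u * fejerKernel (v - u) =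
      ∫ t in (-1 : ℝ)..1, ((1 - |t| : ℝ) : ℂ) * Complex.exp (Complex.I * t * v) *
        G (Complex.I * t) := by
  refine tendsto_nhds_unique (tendsto_setIntegral_mul_exp_mul_fejerKernel hf hfM v)
    ((tendsto_intervalIntegral_mul_right_edge hG (by fun_prop) (-1) 1).congr' ?_)
  filter_upwards [self_mem_nhdsWithin] with δ hδ
  rw [setIntegral_mul_exp_mul_fejerKernel hf hfM hδ]
  refine intervalIntegral.integral_congr fun t _ => ?_
  rw [hfG _ (by simpa using hδ)]

lemma tendsto_intervalIntegral_cexp_mul (g : ℝ → ℂ) {a b : ℝ} (hab : a ≤ b) :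
    Tendsto (fun v : ℝ => ∫ t in a..b, Complex.exp (Complex.I * t * v) * g t) atTop (𝓝 0) := by
  have hfreq : Tendsto (fun v : ℝ => -(v / (2 * Real.pi))) atTop (cocompact ℝ) :=
    (tendsto_neg_atTop_atBot.comp
      (tendsto_id.atTop_div_const (by positivity))).mono_right atBot_le_cocompact
  refine ((Real.tendsto_integral_exp_smul_cocompact ((Ioc a b).indicator g)).comp hfreq).congr
    fun v => ?_
  rw [intervalIntegral.integral_of_le hab, ← integral_indicator measurableSet_Ioc]
  refine integral_congr_ae (.of_forall fun t => ?_)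
  have hphase : ((2 * Real.pi * -(t * -(v / (2 * Real.pi))) : ℝ) : ℂ) * Complex.I =
      Complex.I * t * v := by
    have hpi : (Real.pi : ℂ) ≠ 0 := Complex.ofReal_ne_zero.2 Real.pi_ne_zero
    push_cast
    field_simp
  simp only [indicator_apply, smul_ite, smul_zero, Circle.smul_def, Real.fourierChar_apply,
    hphase, smul_eq_mul]

theorem tendsto_setIntegral_mul_fejerKernel (hf : Measurable f) (hfM : ∀ u, ‖f u‖ ≤ M)
    (hG : ContinuousOn G {s | 0 ≤ s.re})
    (hfG : ∀ s : ℂ, 0 < s.re → laplaceTransform f s = G s) :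
    Tendsto (fun v => ∫ u in Ioi (0 : ℝ), f u * fejerKernel (v - u)) atTop (𝓝 0) := by
  refine (tendsto_intervalIntegral_cexp_mul
    (fun t => ((1 - |t| : ℝ) : ℂ) * G (Complex.I * t)) (by norm_num : (-1 : ℝ) ≤ 1)).congr
    fun v => ?_
  rw [setIntegral_mul_fejerKernel hf hfM hG hfG]
  refine intervalIntegral.integral_congr fun t _ => ?_
  ring

lemma tendsto_integral_comp_sub_mul {g K : ℝ → ℂ} (hg : Measurable g) (hgM : ∀ u, ‖g u‖ ≤ M)
    (hg0 : Tendsto g atTop (𝓝 0)) (hK : Integrable K) :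
    Tendsto (fun v => ∫ w, g (v - w) * K w) atTop (𝓝 0) := by
  rw [← integral_zero ℝ ℂ]
  refine tendsto_integral_filter_of_dominated_convergence (fun w => M * ‖K w‖)
    (.of_forall fun v => ?_) (.of_forall fun v => .of_forall fun w => ?_) (hK.norm.const_mul M)
    (.of_forall fun w => ?_)
  · exact (hg.comp (by fun_prop)).aestronglyMeasurable.mul hK.aestronglyMeasurable
  · rw [norm_mul]
    exact mul_le_mul_of_nonneg_right (hgM _) (norm_nonneg _)
  · have hshift := hg0.comp (tendsto_atTop_add_const_right _ (-w) tendsto_id)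
    simpa only [Function.comp_def, id_eq, ← sub_eq_add_neg, zero_mul] using hshift.mul_const (K w)

/- The values of `f` on the negative half-line, which the Laplace transform does not see, are
negligible for the convolution at `+∞`. -/
theorem tendsto_integral_comp_sub_mul_fejerKernel (hf : Measurable f) (hfM : ∀ u, ‖f u‖ ≤ M)
    (hG : ContinuousOn G {s | 0 ≤ s.re})
    (hfG : ∀ s : ℂ, 0 < s.re → laplaceTransform f s = G s) :
    Tendsto (fun v => ∫ w, f (v - w) * fejerKernel w) atTop (𝓝 0) := by
  have hK : Integrable fun w => (fejerKernel w : ℂ) := integrable_fejerKernel.ofReal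
  have hneg : Tendsto (fun v => ∫ w, (Iic 0).indicator f (v - w) * fejerKernel w) atTop (𝓝 0) := by
    refine tendsto_integral_comp_sub_mul (hf.indicator measurableSet_Iic)
      (fun u => (norm_indicator_le_norm_self f u).trans (hfM u)) ?_ hK
    refine tendsto_const_nhds.congr' ?_
    filter_upwards [eventually_gt_atTop 0] with u hu
    exact (indicator_of_notMem (notMem_Iic.2 hu) f).symm
  rw [← add_zero (0 : ℂ)]
  refine ((tendsto_setIntegral_mul_fejerKernel hf hfM hG hfG).add hneg).congr fun v => ?_
  have hint : Integrable fun u => f u * fejerKernel (v - u) :=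
    (hK.comp_sub_left v).bdd_mul hf.aestronglyMeasurable (.of_forall hfM)
  have hreflect (g : ℝ → ℂ) :
      ∫ w, g (v - w) * fejerKernel w = ∫ u, g u * fejerKernel (v - u) := by
    simpa only [sub_sub_cancel] using
      integral_sub_left_eq_self (fun u => g u * fejerKernel (v - u)) volume v
  rw [hreflect, hreflect, ← integral_add_compl (measurableSet_Ioi (a := 0)) hint, compl_Ioi,
    ← integral_indicator measurableSet_Iic]
  simp only [indicator_mul_left]

lemma laplaceTransform_comp_div {l : ℝ} (hl : 0 < l) (f : ℝ → ℂ) (s : ℂ) :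
    laplaceTransform (fun u => f (u / l)) s = l * laplaceTransform f (l * s) := by
  have h := integral_comp_mul_left_Ioi (fun u => f (u / l) * Complex.exp (-s * u)) 0 hl
  simp only [mul_zero, mul_div_cancel_left₀ _ hl.ne', Complex.real_smul] at h
  rw [laplaceTransform, laplaceTransform, eq_comm, ← eq_inv_mul_iff_mul_eq₀ (by simpa using hl.ne'),
    ← Complex.ofReal_inv, ← h]
  refine integral_congr_ae (.of_forall fun u => ?_)
  push_cast
  ring_nf

lemma tendsto_integral_comp_sub_div_mul_fejerKernel (hf : Measurable f) (hfM : ∀ u, ‖f u‖ ≤ M)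
    (hG : ContinuousOn G {s | 0 ≤ s.re})
    (hfG : ∀ s : ℂ, 0 < s.re → laplaceTransform f s = G s) {l : ℝ} (hl : 0 < l) :
    Tendsto (fun v => ∫ w, f (v - w / l) * fejerKernel w) atTop (𝓝 0) := by
  have hre (s : ℂ) : (l * s).re = l * s.re := Complex.re_ofReal_mul l s
  have hGl : ContinuousOn (fun s => l * G (l * s)) {s | 0 ≤ s.re} := by
    refine continuousOn_const.mul (hG.comp (by fun_prop) fun s hs => ?_)
    exact (mul_nonneg hl.le hs).trans_eq (hre s).symm
  have hlim := tendsto_integral_comp_sub_mul_fejerKernel (f := fun u => f (u / l))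
    (hf.comp (by fun_prop)) (fun u => hfM _) hGl fun s hs => by
      rw [laplaceTransform_comp_div hl, hfG _ (hre s ▸ mul_pos hl hs)]
  refine (hlim.comp (tendsto_id.const_mul_atTop hl)).congr fun v => ?_
  simp only [Function.comp_apply, id_eq, sub_div, mul_div_cancel_left₀ _ hl.ne']

theorem tendsto_of_laplaceTransform_sub_const {B : ℝ → ℝ} {A : ℝ} (hB0 : 0 ≤ B)
    (hBM : ∀ u, B u ≤ M) (hB : Monotone fun u => B u * Real.exp u)
    (hG : ContinuousOn G {s | 0 ≤ s.re})
    (hBG : ∀ s : ℂ, 0 < s.re → laplaceTransform (fun u => (B u - A : ℝ)) s = G s) :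
    Tendsto B atTop (𝓝 A) := by
  have hBm := measurable_of_monotone_mul_exp hB
  refine tendsto_of_tendsto_kernel_average hB0 hBM hB fejerKernel_nonneg integrable_fejerKernel
    integral_fejerKernel_pos fun l hl => ?_
  have hbound (u : ℝ) : ‖((B u - A : ℝ) : ℂ)‖ ≤ M + |A| := by
    rw [Complex.norm_real]
    refine (norm_sub_le _ _).trans (add_le_add ?_ le_rfl)
    rw [Real.norm_of_nonneg (hB0 u)]
    exact hBM u
  have hlim := (Complex.continuous_re.tendsto _).comp
    (tendsto_integral_comp_sub_div_mul_fejerKernel (by fun_prop) hbound hG hBG hl)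
  have hlim' : Tendsto (fun v => ∫ w, (B (v - w / l) - A) * fejerKernel w) atTop (𝓝 0) := by
    refine hlim.congr fun v => ?_
    simp only [Function.comp_apply, ← Complex.ofReal_mul, integral_complex_ofReal,
      Complex.ofReal_re]
  rw [← zero_add (A * _)]
  refine (hlim'.add_const (A * ∫ w, fejerKernel w)).congr fun v => ?_
  have hint : Integrable fun w => B (v - w / l) * fejerKernel w :=
    integrable_comp_sub_div_mul hBm hB0 hBM integrable_fejerKernel v l
  simp only [sub_mul]
  rw [integral_sub hint (integrable_fejerKernel.const_mul A), integral_const_mul, sub_add_cancel]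

lemma integrableOn_mul_cexp_Ioi (hf : Measurable f) (hfM : ∀ u, ‖f u‖ ≤ M) {s : ℂ}
    (hs : 0 < s.re) : IntegrableOn (fun u : ℝ => f u * Complex.exp (-s * u)) (Ioi 0) :=
  (integrableOn_exp_mul_complex_Ioi (by simpa using hs) 0).bdd_mul hf.aestronglyMeasurable
    (.of_forall hfM)

lemma laplaceTransform_sub {g : ℝ → ℂ} {N : ℝ} (hf : Measurable f) (hfM : ∀ u, ‖f u‖ ≤ M)
    (hg : Measurable g) (hgN : ∀ u, ‖g u‖ ≤ N) {s : ℂ} (hs : 0 < s.re) :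
    laplaceTransform (fun u => f u - g u) s = laplaceTransform f s - laplaceTransform g s := by
  simp only [laplaceTransform, sub_mul]
  exact integral_sub (integrableOn_mul_cexp_Ioi hf hfM hs) (integrableOn_mul_cexp_Ioi hg hgN hs)

lemma laplaceTransform_const (c : ℂ) {s : ℂ} (hs : 0 < s.re) :
    laplaceTransform (fun _ => c) s = c / s := by
  rw [laplaceTransform, integral_const_mul, integral_exp_mul_complex_Ioi (by simpa using hs)]
  simp [div_eq_mul_inv]

end Laplace

section WienerIkehara

/-- The mean `x⁻¹ * ∑_{1 ≤ k ≤ x} a k` as a function of the logarithmic variable `u = log x`. -/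
noncomputable def logScaleMean (a : ℕ → ℝ) (u : ℝ) : ℝ :=
  Real.exp (-u) * ∑ k ∈ Finset.Icc 1 ⌊Real.exp u⌋₊, a k

variable {a : ℕ → ℝ}

lemma logScaleMean_log {n : ℕ} (hn : n ≠ 0) :
    logScaleMean a (Real.log n) = (∑ k ∈ Finset.Icc 1 n, a k) / n := by
  rw [logScaleMean, Real.exp_neg, Real.exp_log (by positivity), Nat.floor_natCast,
    inv_mul_eq_div]

lemma logScaleMean_nonneg (ha : 0 ≤ a) : 0 ≤ logScaleMean a := fun _ =>
  mul_nonneg (Real.exp_nonneg _) (Finset.sum_nonneg fun k _ => ha k)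

lemma monotone_logScaleMean_mul_exp (ha : 0 ≤ a) :
    Monotone fun u => logScaleMean a u * Real.exp u := by
  intro u w huw
  simp only [logScaleMean, mul_right_comm, ← Real.exp_add, neg_add_cancel, Real.exp_zero, one_mul]
  exact Finset.sum_le_sum_of_subset_of_nonneg
    (Finset.Icc_subset_Icc_right (Nat.floor_le_floor (Real.exp_le_exp.2 huw))) fun k _ _ => ha k

lemma exists_forall_logScaleMean_le
    (hO : (fun n : ℕ => ∑ k ∈ Finset.Icc 1 n, a k) =O[atTop] fun n => (n : ℝ)) :
    ∃ C, ∀ u, logScaleMean a u ≤ C := by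
  obtain ⟨C, hC, hbound⟩ := Asymptotics.bound_of_isBigO_nat_atTop hO
  refine ⟨C, fun u => ?_⟩
  have hsum : ∑ k ∈ Finset.Icc 1 ⌊Real.exp u⌋₊, a k ≤ C * Real.exp u := by
    rcases Nat.eq_zero_or_pos ⌊Real.exp u⌋₊ with h0 | hpos
    · rw [h0, Finset.Icc_eq_empty (by norm_num), Finset.sum_empty]
      positivity
    · calc ∑ k ∈ Finset.Icc 1 ⌊Real.exp u⌋₊, a k
          ≤ ‖∑ k ∈ Finset.Icc 1 ⌊Real.exp u⌋₊, a k‖ := Real.le_norm_self _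
        _ ≤ C * ‖(⌊Real.exp u⌋₊ : ℝ)‖ := hbound (Nat.cast_ne_zero.2 hpos.ne')
        _ ≤ C * Real.exp u := by
          rw [Real.norm_of_nonneg (Nat.cast_nonneg _)]
          exact mul_le_mul_of_nonneg_left (Nat.floor_le (Real.exp_nonneg u)) hC.le
  calc logScaleMean a u ≤ Real.exp (-u) * (C * Real.exp u) :=
        mul_le_mul_of_nonneg_left hsum (Real.exp_nonneg _)
    _ = C := by rw [mul_left_comm, ← Real.exp_add, neg_add_cancel, Real.exp_zero, mul_one]

lemma laplaceTransform_logScaleMean (ha : 0 ≤ a)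
    (hO : (fun n : ℕ => ∑ k ∈ Finset.Icc 1 n, a k) =O[atTop] fun n => (n : ℝ)) {s : ℂ}
    (hs : 0 < s.re) :
    laplaceTransform (fun u => logScaleMean a u) s =
      LSeries (fun n => a n) (1 + s) / (1 + s) := by
  have hs1 : (1 : ℝ) < (1 + s).re := by simpa using hs
  have hs0 : 1 + s ≠ 0 := Complex.ne_zero_of_re_pos (one_pos.trans hs1)
  rw [LSeries_eq_mul_integral_of_nonneg a zero_le_one hs1 (by simpa only [Real.rpow_one] using hO)
    ha, mul_div_cancel_left₀ _ hs0, ← Real.exp_zero, ← Real.image_exp_Ioi,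
    integral_image_eq_integral_abs_deriv_smul measurableSet_Ioi
      (fun u _ => (Real.hasDerivAt_exp u).hasDerivWithinAt) Real.exp_injective.injOn]
  refine setIntegral_congr_fun measurableSet_Ioi fun u _ => ?_
  have hcpow : ((Real.exp u : ℝ) : ℂ) ^ (-(1 + s + 1)) = Complex.exp (-(1 + s + 1) * u) := by
    rw [Complex.cpow_def_of_ne_zero (Complex.ofReal_ne_zero.2 (Real.exp_ne_zero u)),
      ← Complex.ofReal_log (Real.exp_nonneg u), Real.log_exp, mul_comm]
  have hexp : Complex.exp (-u) * Complex.exp (-s * u) =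
      Complex.exp u * Complex.exp (-(1 + s + 1) * u) := by
    rw [← Complex.exp_add, ← Complex.exp_add]
    ring_nf
  simp only [hcpow, abs_of_pos (Real.exp_pos u), Complex.real_smul, logScaleMean]
  push_cast
  linear_combination (∑ k ∈ Finset.Icc 1 ⌊Real.exp u⌋₊, (a k : ℂ)) * hexp

theorem tendsto_sum_div_of_LSeries_eq (ha : 0 ≤ a)
    (hO : (fun n : ℕ => ∑ k ∈ Finset.Icc 1 n, a k) =O[atTop] fun n => (n : ℝ)) {A : ℝ}
    {G : ℂ → ℂ} (hG : ContinuousOn G {s | 1 ≤ s.re})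
    (hL : ∀ s : ℂ, 1 < s.re → LSeries (fun n => a n) s = A / (s - 1) + G s) :
    Tendsto (fun n : ℕ => (∑ k ∈ Finset.Icc 1 n, a k) / n) atTop (𝓝 A) := by
  obtain ⟨C, hC⟩ := exists_forall_logScaleMean_le hO
  have hmono := monotone_logScaleMean_mul_exp ha
  have hne {s : ℂ} (hs : 0 ≤ s.re) : 1 + s ≠ 0 :=
    Complex.ne_zero_of_re_pos (by simpa using add_pos_of_pos_of_nonneg one_pos hs)
  have hcont : ContinuousOn (fun s : ℂ => (G (1 + s) - A) / (1 + s)) {s | 0 ≤ s.re} :=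
    ((hG.comp (by fun_prop) fun s hs => by simpa using hs).sub continuousOn_const).div
      (by fun_prop) fun s hs => hne hs
  have hlaplace (s : ℂ) (hs : 0 < s.re) :
      laplaceTransform (fun u => (logScaleMean a u - A : ℝ)) s = (G (1 + s) - A) / (1 + s) := by
    have hm := measurable_of_monotone_mul_exp hmono
    have hbound (u : ℝ) : ‖(logScaleMean a u : ℂ)‖ ≤ C := by
      rw [Complex.norm_real, Real.norm_of_nonneg (logScaleMean_nonneg ha u)]
      exact hC u
    have hs0 : s ≠ 0 := Complex.ne_zero_of_re_pos hs
    have hs1 := hne hs.le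
    simp only [Complex.ofReal_sub]
    rw [laplaceTransform_sub (by fun_prop) hbound measurable_const (fun _ => le_rfl) hs,
      laplaceTransform_logScaleMean ha hO hs, laplaceTransform_const _ hs,
      hL _ (by simpa using hs), add_sub_cancel_left]
    field_simp
    ring
  refine ((tendsto_of_laplaceTransform_sub_const (logScaleMean_nonneg ha) hC hmono hcont
    hlaplace).comp (Real.tendsto_log_atTop.comp tendsto_natCast_atTop_atTop)).congr' ?_
  filter_upwards [eventually_ne_atTop 0] with n hn
  exact logScaleMean_log hn

end WienerIkehara

section PrimeMean

/-- The values of `f` at the primes `p ≤ x` have mean tending to `l`. For the indicator function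
of a set `Π`, this says that `Π` has natural density `l` in the primes. -/
def HasPrimeMean (f : ℕ → ℝ) (l : ℝ) : Prop :=
  Tendsto (fun x : ℕ => (∑ p ∈ x.primesLE, f p) / (x.primeCounting : ℝ)) atTop (𝓝 l)

lemma tendsto_primeCounting_cast : Tendsto (fun x : ℕ => (x.primeCounting : ℝ)) atTop atTop :=
  tendsto_natCast_atTop_atTop.comp Nat.tendsto_primeCounting

namespace HasPrimeMean

variable {f g : ℕ → ℝ} {l : ℝ}

lemma const (c : ℝ) : HasPrimeMean (fun _ => c) c := by
  refine tendsto_const_nhds.congr' ?_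
  filter_upwards [tendsto_primeCounting_cast.eventually_ne_atTop 0] with x hx
  rw [Finset.sum_const, Nat.primesLE_card_eq_primeCounting, nsmul_eq_mul,
    mul_div_cancel_left₀ _ hx]

lemma const_mul (hf : HasPrimeMean f l) (c : ℝ) : HasPrimeMean (fun p => c * f p) (c * l) := by
  refine (Tendsto.const_mul c hf).congr fun x => ?_
  rw [← Finset.mul_sum, mul_div_assoc]

lemma sum {ι : Type*} {s : Finset ι} {f : ι → ℕ → ℝ} {l : ι → ℝ}
    (h : ∀ i ∈ s, HasPrimeMean (f i) (l i)) :
    HasPrimeMean (fun p => ∑ i ∈ s, f i p) (∑ i ∈ s, l i) := by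
  refine (tendsto_finsetSum s h).congr fun x => ?_
  rw [← Finset.sum_div, Finset.sum_comm]

lemma congr (hf : HasPrimeMean f l) (hfg : {p : ℕ | p.Prime ∧ f p ≠ g p}.Finite) :
    HasPrimeMean g l := by
  set F := hfg.toFinset
  have hdiff (x : ℕ) : |∑ p ∈ x.primesLE, (g p - f p)| ≤ ∑ p ∈ F, |g p - f p| := by
    have hvanish (p : ℕ) (hp : p ∈ x.primesLE) (hne : g p - f p ≠ 0) : p ∈ F :=
      hfg.mem_toFinset.2 ⟨Nat.prime_of_mem_primesLE hp, (sub_ne_zero.1 hne).symm⟩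
    rw [← Finset.sum_filter_of_ne hvanish]
    refine (Finset.abs_sum_le_sum_abs _ _).trans (Finset.sum_le_sum_of_subset_of_nonneg
      (fun p hp => (Finset.mem_filter.1 hp).2) fun _ _ _ => abs_nonneg _)
  have hzero : Tendsto (fun x : ℕ => (∑ p ∈ x.primesLE, (g p - f p)) / (x.primeCounting : ℝ))
      atTop (𝓝 0) := by
    refine squeeze_zero_norm (fun x => ?_)
      (tendsto_primeCounting_cast.const_div_atTop (∑ p ∈ F, |g p - f p|))
    rw [norm_div, Real.norm_eq_abs, Real.norm_natCast]
    exact div_le_div_of_nonneg_right (hdiff x) (Nat.cast_nonneg _)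
  have hsum := Tendsto.add hf hzero
  rw [add_zero] at hsum
  refine hsum.congr fun x => ?_
  rw [← add_div, ← Finset.sum_add_distrib]
  simp only [add_sub_cancel]

lemma tendsto_ncard_div {P : Set ℕ} (hP : P ⊆ {p | p.Prime})
    (h : HasPrimeMean (P.indicator 1) l) :
    Tendsto (fun x : ℕ => ({p | p ∈ P ∧ p ≤ x}.ncard : ℝ) / ({p : ℕ | p.Prime ∧ p ≤ x}.ncard : ℝ))
      atTop (𝓝 l) := by
  classical
  refine Tendsto.congr (fun x => ?_) h
  have hall : {p : ℕ | p.Prime ∧ p ≤ x} = x.primesLE := by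
    ext p
    simp only [mem_ofPred_eq, Finset.mem_coe, Nat.mem_primesLE, and_comm]
  have hmem : {p | p ∈ P ∧ p ≤ x} = (x.primesLE.filter (· ∈ P) : Set ℕ) := by
    ext p
    simp only [mem_ofPred_eq, Finset.coe_filter, Nat.mem_primesLE]
    exact ⟨fun hp => ⟨⟨hp.2, hP hp.1⟩, hp.1⟩, fun hp => ⟨hp.2, hp.1.1⟩⟩
  rw [hall, hmem, ncard_coe_finset, ncard_coe_finset, Nat.primesLE_card_eq_primeCounting,
    Finset.sum_indicator_eq_sum_filter]
  simp

end HasPrimeMean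

end PrimeMean

section PrimeNumberTheorem

open ArithmeticFunction Chebyshev

lemma tendsto_psi_sub_theta_div : Tendsto (fun x => (ψ x - θ x) / x) atTop (𝓝 0) := by
  have hsqrt : Tendsto (fun x : ℝ => √x / x) atTop (𝓝 0) := by
    simpa only [Real.sqrt_div_self'] using Real.tendsto_sqrt_atTop.const_div_atTop 1
  simp only [div_eq_mul_inv] at hsqrt ⊢
  exact (isBigO_psi_sub_theta_sqrt.mul (Asymptotics.isBigO_refl _ _)).trans_tendsto hsqrt

lemma tendsto_primeCounting_mul_log_sub_theta_div :
    Tendsto (fun x : ℝ => (⌊x⌋₊.primeCounting * Real.log x - θ x) / x) atTop (𝓝 0) := by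
  have hlog : Tendsto (fun x => x / Real.log x ^ 2 * (Real.log x / x)) atTop (𝓝 0) := by
    refine (Real.tendsto_log_atTop.const_div_atTop 1).congr' ?_
    filter_upwards [eventually_gt_atTop 1] with x hx
    have := Real.log_pos hx
    field_simp
  refine ((primeCounting_sub_theta_div_log_isBigO.mul
    (Asymptotics.isBigO_refl _ _)).trans_tendsto hlog).congr' ?_
  filter_upwards [eventually_gt_atTop 1] with x hx
  have := Real.log_pos hx
  field_simp

variable {g : ℕ → ℝ} {M c : ℝ}

lemma abs_sum_mul_vonMangoldt_sub_sum_mul_log_le (hg : ∀ n, |g n| ≤ M) (x : ℕ) :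
    |∑ k ∈ Finset.Icc 1 x, g k * vonMangoldt k - ∑ p ∈ x.primesLE, g p * Real.log p| ≤
      M * (ψ x - θ x) := by
  have hprimes : ∑ p ∈ x.primesLE, g p * Real.log p =
      ∑ k ∈ Finset.Icc 1 x with k.Prime, g k * vonMangoldt k := by
    rw [Nat.primesLE_eq_filter_Icc_one]
    exact Finset.sum_congr rfl fun p hp => by
      rw [vonMangoldt_apply_prime (Finset.mem_filter.1 hp).2]
  rw [hprimes, ← Finset.sum_filter_add_sum_filter_not (Finset.Icc 1 x) Nat.Prime,
    add_sub_cancel_left, psi_sub_theta_eq_sum_not_prime, Nat.floor_natCast, Finset.mul_sum]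
  refine (Finset.abs_sum_le_sum_abs _ _).trans (Finset.sum_le_sum fun k _ => ?_)
  rw [abs_mul, abs_of_nonneg (vonMangoldt_nonneg (n := k))]
  exact mul_le_mul_of_nonneg_right (hg k) vonMangoldt_nonneg

lemma abs_sum_mul_log_sub_sum_mul_log_le (hg : ∀ n, |g n| ≤ M) (x : ℕ) :
    |(∑ p ∈ x.primesLE, g p) * Real.log x - ∑ p ∈ x.primesLE, g p * Real.log p| ≤
      M * (x.primeCounting * Real.log x - θ x) := by
  rw [theta_eq_sum_primesLE_log, ← Nat.primesLE_card_eq_primeCounting, Finset.sum_mul,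
    ← nsmul_eq_mul, ← Finset.sum_const, ← Finset.sum_sub_distrib, ← Finset.sum_sub_distrib,
    Finset.mul_sum]
  refine (Finset.abs_sum_le_sum_abs _ _).trans (Finset.sum_le_sum fun p hp => ?_)
  have hlog : Real.log p ≤ Real.log x :=
    Real.log_le_log (Nat.cast_pos.2 (Nat.prime_of_mem_primesLE hp).pos)
      (Nat.cast_le.2 (Nat.le_of_mem_primesLE hp))
  rw [← mul_sub, abs_mul, abs_of_nonneg (sub_nonneg.2 hlog)]
  exact mul_le_mul_of_nonneg_right (hg p) (sub_nonneg.2 hlog)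

lemma tendsto_sum_mul_log_div (hg : ∀ n, |g n| ≤ M)
    (h : Tendsto (fun x : ℕ => (∑ k ∈ Finset.Icc 1 x, g k * vonMangoldt k) / (x : ℝ)) atTop
      (𝓝 c)) :
    Tendsto (fun x : ℕ => (∑ p ∈ x.primesLE, g p) * Real.log x / x) atTop (𝓝 c) := by
  have hψθ := ((tendsto_psi_sub_theta_div.comp tendsto_natCast_atTop_atTop).const_mul M)
  have hπθ := ((tendsto_primeCounting_mul_log_sub_theta_div.comp
    tendsto_natCast_atTop_atTop).const_mul M)
  rw [mul_zero] at hψθ hπθ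
  have hpowers : Tendsto (fun x : ℕ => (∑ k ∈ Finset.Icc 1 x, g k * vonMangoldt k -
      ∑ p ∈ x.primesLE, g p * Real.log p) / (x : ℝ)) atTop (𝓝 0) := by
    refine squeeze_zero_norm (fun x => ?_) hψθ
    rw [norm_div, Real.norm_natCast, Function.comp_apply, ← mul_div_assoc]
    exact div_le_div_of_nonneg_right (abs_sum_mul_vonMangoldt_sub_sum_mul_log_le hg x)
      (Nat.cast_nonneg x)
  have hweights : Tendsto (fun x : ℕ => ((∑ p ∈ x.primesLE, g p) * Real.log x -
      ∑ p ∈ x.primesLE, g p * Real.log p) / (x : ℝ)) atTop (𝓝 0) := by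
    refine squeeze_zero_norm (fun x => ?_) hπθ
    rw [norm_div, Real.norm_natCast, Function.comp_apply, ← mul_div_assoc, Nat.floor_natCast]
    exact div_le_div_of_nonneg_right (abs_sum_mul_log_sub_sum_mul_log_le hg x) (Nat.cast_nonneg x)
  have hsum := (h.sub hpowers).add hweights
  rw [sub_zero, add_zero] at hsum
  refine hsum.congr fun x => ?_
  ring

theorem tendsto_sum_residueClass_div {q : ℕ} [NeZero q] {a : ZMod q} (ha : IsUnit a) :
    Tendsto (fun x : ℕ => (∑ k ∈ Finset.Icc 1 x, vonMangoldt.residueClass a k) / (x : ℝ)) atTop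
      (𝓝 (q.totient : ℝ)⁻¹) := by
  have hO : (fun n : ℕ => ∑ k ∈ Finset.Icc 1 n, vonMangoldt.residueClass a k) =O[atTop]
      fun n => (n : ℝ) := by
    refine .of_bound (Real.log 4 + 4) (.of_forall fun n => ?_)
    rw [Real.norm_of_nonneg (Finset.sum_nonneg fun k _ => vonMangoldt.residueClass_nonneg a k),
      Real.norm_natCast]
    calc ∑ k ∈ Finset.Icc 1 n, vonMangoldt.residueClass a k
        ≤ ∑ k ∈ Finset.Icc 1 n, vonMangoldt k :=
          Finset.sum_le_sum fun k _ => vonMangoldt.residueClass_le a k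
      _ = ψ n := by rw [psi, Nat.floor_natCast]; rfl
      _ ≤ (Real.log 4 + 4) * n := psi_le_const_mul_self (Nat.cast_nonneg n)
  refine tendsto_sum_div_of_LSeries_eq (vonMangoldt.residueClass_nonneg a) hO
    (vonMangoldt.continuousOn_LFunctionResidueClassAux a) fun s hs => ?_
  rw [vonMangoldt.eqOn_LFunctionResidueClassAux ha hs]
  push_cast
  ring

lemma tendsto_primeCounting_mul_log_div :
    Tendsto (fun x : ℕ => x.primeCounting * Real.log x / x) atTop (𝓝 1) := by
  have hΛ := tendsto_sum_residueClass_div (q := 1) (a := 0) (isUnit_of_subsingleton 0)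
  rw [Nat.totient_one, Nat.cast_one, inv_one] at hΛ
  refine (tendsto_sum_mul_log_div (g := 1) (M := 1) (fun n => by simp) (hΛ.congr fun x => ?_)).congr
    fun x => ?_
  · refine congrArg (· / (x : ℝ)) (Finset.sum_congr rfl fun k _ => ?_)
    have hk : k ∈ {n : ℕ | (n : ZMod 1) = 0} := Subsingleton.elim (k : ZMod 1) 0
    rw [vonMangoldt.residueClass, indicator_of_mem hk, Pi.one_apply, one_mul]
  · simp [Nat.primesLE_card_eq_primeCounting]

theorem hasPrimeMean_of_tendsto_sum_mul_vonMangoldt (hg : ∀ n, |g n| ≤ M)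
    (h : Tendsto (fun x : ℕ => (∑ k ∈ Finset.Icc 1 x, g k * vonMangoldt k) / (x : ℝ)) atTop
      (𝓝 c)) : HasPrimeMean g c := by
  have hquot := (tendsto_sum_mul_log_div hg h).div tendsto_primeCounting_mul_log_div one_ne_zero
  rw [div_one] at hquot
  refine hquot.congr' ?_
  filter_upwards [eventually_gt_atTop 1] with x hx
  have hlog := Real.log_pos (Nat.one_lt_cast.2 hx)
  have hx0 : (x : ℝ) ≠ 0 := by positivity
  simp only [Pi.div_apply]
  rw [div_div_div_cancel_right₀ hx0, mul_div_mul_right _ _ hlog.ne']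

theorem hasPrimeMean_residueClass {q : ℕ} [NeZero q] {a : ZMod q} (ha : IsUnit a) :
    HasPrimeMean ({p : ℕ | (p : ZMod q) = a}.indicator 1) (q.totient : ℝ)⁻¹ := by
  refine hasPrimeMean_of_tendsto_sum_mul_vonMangoldt (M := 1) (fun n => ?_)
    ((tendsto_sum_residueClass_div ha).congr fun x => ?_)
  · rw [indicator_apply]
    split_ifs <;> simp
  · refine congrArg (· / (x : ℝ)) (Finset.sum_congr rfl fun k _ => ?_)
    rw [vonMangoldt.residueClass, indicator_apply, indicator_apply]
    split_ifs <;> simp_all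

theorem hasPrimeMean_comp_natCast_zmod {q : ℕ} [NeZero q] (g : ZMod q → ℝ) :
    HasPrimeMean (fun p => g p) ((∑ a with IsUnit a, g a) / q.totient) := by
  rw [div_eq_mul_inv, Finset.sum_mul]
  refine (HasPrimeMean.sum fun a ha =>
    (hasPrimeMean_residueClass (Finset.mem_filter.1 ha).2).const_mul (g a)).congr ?_
  refine (Nat.primeFactors q).finite_toSet.subset fun p ⟨hp, hne⟩ => ?_
  refine Nat.mem_primeFactors.2 ⟨hp, ?_, NeZero.ne q⟩
  contrapose! hne
  have hunit : IsUnit (p : ZMod q) := (ZMod.isUnit_iff_coprime p q).2 (hp.coprime_iff_not_dvd.2 hne)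
  simp [indicator_apply, hunit]

end PrimeNumberTheorem

section IsSquare

lemma isSquare_iff_forall_even_factorization {n : ℕ} (hn : n ≠ 0) :
    IsSquare n ↔ ∀ q, Even (n.factorization q) := by
  refine ⟨?_, fun h => ?_⟩
  · rintro ⟨r, rfl⟩ q
    rw [← sq, Nat.factorization_pow, Finsupp.smul_apply, smul_eq_mul]
    exact even_two_mul _
  · rw [← Nat.prod_factorization_pow_eq_self hn]
    exact Finset.isSquare_prod _ fun q _ => (h q).isSquare_pow q

end IsSquare

section JacobiSym

variable {q m n : ℕ}

lemma odd_of_modEq_one {b : ℕ} (hb : b ≡ 1 [MOD 4 * m]) : Odd b :=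
  Nat.odd_iff.2 (hb.of_dvd ⟨2 * m, by ring⟩)

lemma jacobiSym_eq_one_of_modEq_one {b : ℕ} (hb : b ≡ 1 [MOD 4 * m]) : jacobiSym m b = 1 := by
  have hodd := odd_of_modEq_one hb
  rw [jacobiSym.mod_right' m hodd, hb, ← jacobiSym.mod_right' m odd_one, jacobiSym.one_right]

lemma exists_jacobiSym_two_eq_neg_one (hm : ¬ 2 ∣ m) :
    ∃ b, b ≡ 1 [MOD 4 * m] ∧ jacobiSym (2 : ℕ) b = -1 := by
  have hcop : Nat.Coprime 8 m := (Nat.prime_two.coprime_iff_not_dvd.2 hm).pow_left 3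
  obtain ⟨b, hb8, hbm⟩ := Nat.chineseRemainder hcop 5 1
  have hb5 : b % 8 = 5 := hb8
  have hodd : Odd b := by
    rw [Nat.odd_iff]
    omega
  have hb4 : b ≡ 1 [MOD 4] := by
    change b % 4 = 1
    omega
  refine ⟨b, (Nat.modEq_and_modEq_iff_modEq_mul (hcop.coprime_dvd_left ⟨2, rfl⟩)).1 ⟨hb4, hbm⟩, ?_⟩
  rw [Nat.cast_ofNat, jacobiSym.at_two hodd, ZMod.χ₈_nat_mod_eight, hb5]
  rfl

lemma exists_jacobiSym_odd_prime_eq_neg_one (hq : q.Prime) (hq2 : q ≠ 2) (hm : ¬ q ∣ m) :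
    ∃ b, b ≡ 1 [MOD 4 * m] ∧ jacobiSym q b = -1 := by
  have : Fact q.Prime := ⟨hq⟩
  obtain ⟨c, hc⟩ := FiniteField.exists_nonsquare (F := ZMod q) (by rwa [ZMod.ringChar_zmod_n])
  have hcop : Nat.Coprime (4 * m) q :=
    .mul_left (((Nat.coprime_primes Nat.prime_two hq).2 hq2.symm).pow_left 2)
      (hq.coprime_iff_not_dvd.2 hm).symm
  obtain ⟨b, hbm, hbc⟩ := Nat.chineseRemainder hcop 1 c.val
  replace hbc : (b : ZMod q) = c := by
    rw [(ZMod.natCast_eq_natCast_iff b c.val q).2 hbc, ZMod.natCast_zmod_val]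
  refine ⟨b, hbm, ?_⟩
  rw [jacobiSym.quadratic_reciprocity_one_mod_four' (hq.odd_of_ne_two hq2)
    (hbm.of_dvd (dvd_mul_right 4 m))]
  refine ZMod.nonsquare_iff_jacobiSym_eq_neg_one.2 ?_
  rwa [Int.cast_natCast, hbc]

theorem exists_jacobiSym_eq_neg_one (hn : n ≠ 0) (h : ¬ IsSquare n) :
    ∃ b, Odd b ∧ jacobiSym n b = -1 := by
  obtain ⟨q, hodd⟩ := not_forall.1 (mt (isSquare_iff_forall_even_factorization hn).2 h)
  have hq : q.Prime := by
    by_contra hq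
    exact hodd (Nat.factorization_eq_zero_of_not_prime n hq ▸ Even.zero)
  have hm := Nat.not_dvd_ordCompl hq hn
  set m := n / q ^ n.factorization q
  have hnm : q ^ n.factorization q * m = n := Nat.ordProj_mul_ordCompl_eq_self n q
  obtain ⟨b, hb, hqb⟩ : ∃ b, b ≡ 1 [MOD 4 * m] ∧ jacobiSym q b = -1 := by
    rcases eq_or_ne q 2 with rfl | hq2
    · exact exists_jacobiSym_two_eq_neg_one hm
    · exact exists_jacobiSym_odd_prime_eq_neg_one hq hq2 hm
  refine ⟨b, odd_of_modEq_one hb, ?_⟩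
  rw [← hnm, Nat.cast_mul, Nat.cast_pow, jacobiSym.mul_left, jacobiSym.pow_left, hqb,
    jacobiSym_eq_one_of_modEq_one hb, (Nat.not_even_iff_odd.1 hodd).neg_one_pow, mul_one]

lemma isUnit_natCast_zmod_four_mul {b : ℕ} :
    IsUnit (b : ZMod (4 * n)) ↔ Odd b ∧ b.Coprime n := by
  rw [ZMod.isUnit_iff_coprime, Nat.coprime_mul_iff_right, show 4 = 2 ^ 2 from rfl,
    Nat.coprime_pow_right_iff two_pos, Nat.coprime_two_right]

lemma jacobiSym_val_natCast {b : ℕ} (hb : Odd b) :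
    jacobiSym n (b : ZMod (4 * n)).val = jacobiSym n b := by
  rw [ZMod.val_natCast, ← jacobiSym.mod_right' n hb]

variable [NeZero n]

lemma exists_odd_natCast_eq {a : ZMod (4 * n)} (ha : IsUnit a) : ∃ b : ℕ, Odd b ∧ b = a := by
  rw [← ZMod.natCast_zmod_val a, isUnit_natCast_zmod_four_mul] at ha
  exact ⟨a.val, ha.1, ZMod.natCast_zmod_val a⟩

variable (n) in
/-- The quadratic Dirichlet character `b ↦ J(n | b)` of modulus `4 * n`, where it has to be
extended by zero: `J(n | b)` may be nonzero for even `b`. -/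
def jacobiChar : DirichletCharacter ℤ (4 * n) where
  toFun a := if IsUnit a then jacobiSym n a.val else 0
  map_one' := by
    have hone := jacobiSym_val_natCast (n := n) odd_one
    rw [Nat.cast_one, jacobiSym.one_right] at hone
    rw [if_pos isUnit_one, hone]
  map_mul' a b := by
    by_cases hab : IsUnit a ∧ IsUnit b
    · rw [if_pos (hab.1.mul hab.2), if_pos hab.1, if_pos hab.2]
      obtain ⟨i, hi, rfl⟩ := exists_odd_natCast_eq hab.1
      obtain ⟨j, hj, rfl⟩ := exists_odd_natCast_eq hab.2
      rw [← Nat.cast_mul, jacobiSym_val_natCast (hi.mul hj), jacobiSym_val_natCast hi,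
        jacobiSym_val_natCast hj, jacobiSym.mul_right' _ hi.pos.ne' hj.pos.ne']
    · rw [if_neg (mt IsUnit.mul_iff.1 hab), ite_zero_mul_ite_zero, if_neg hab]
  map_nonunit' a ha := if_neg ha

lemma jacobiChar_natCast {b : ℕ} (hb : Odd b) : jacobiChar n b = jacobiSym n b := by
  change (if IsUnit (b : ZMod (4 * n)) then _ else _) = _
  split_ifs with hunit
  · exact jacobiSym_val_natCast hb
  · rw [eq_comm, jacobiSym.eq_zero_iff, Int.gcd_natCast_natCast, Nat.gcd_comm]
    exact ⟨hb.pos.ne', fun hcop => hunit (isUnit_natCast_zmod_four_mul.2 ⟨hb, hcop⟩)⟩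

lemma jacobiChar_ne_one (h : ¬ IsSquare n) : jacobiChar n ≠ 1 := by
  obtain ⟨b, hodd, hb⟩ := exists_jacobiSym_eq_neg_one (NeZero.ne n) h
  have hval : jacobiChar n b = -1 := (jacobiChar_natCast hodd).trans hb
  intro hone
  by_cases hunit : IsUnit (b : ZMod (4 * n))
  · rw [hone, MulChar.one_apply hunit] at hval
    norm_num at hval
  · rw [MulChar.map_nonunit _ hunit] at hval
    norm_num at hval

end JacobiSym

section PrimeMeanJacobi

variable {n : ℕ}

theorem hasPrimeMean_jacobiSym_of_isSquare (hn : n ≠ 0) (h : IsSquare n) :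
    HasPrimeMean (fun p => jacobiSym n p) 1 := by
  obtain ⟨r, rfl⟩ := h
  refine (HasPrimeMean.const 1).congr (r.primeFactors.finite_toSet.subset fun p ⟨hp, hne⟩ => ?_)
  refine Nat.mem_primeFactors.2 ⟨hp, ?_, left_ne_zero_of_mul hn⟩
  contrapose! hne
  rw [Nat.cast_mul, ← sq, jacobiSym.sq_one', Int.cast_one]
  exact ((hp.coprime_iff_not_dvd).2 hne).symm

theorem hasPrimeMean_jacobiSym_of_not_isSquare (h : ¬ IsSquare n) :
    HasPrimeMean (fun p => jacobiSym n p) 0 := by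
  have : NeZero n := ⟨fun hn => h (hn ▸ .zero)⟩
  have hsum : ∑ a with IsUnit a, (jacobiChar n a : ℝ) = 0 := by
    rw [Finset.sum_filter_of_ne, ← Int.cast_sum,
      MulChar.sum_eq_zero_of_ne_one (jacobiChar_ne_one h), Int.cast_zero]
    intro a _ ha
    contrapose! ha
    rw [MulChar.map_nonunit _ ha, Int.cast_zero]
  have hmean := hasPrimeMean_comp_natCast_zmod fun a => (jacobiChar n a : ℝ)
  rw [hsum, zero_div] at hmean
  refine hmean.congr ((finite_singleton 2).subset fun p ⟨hp, hne⟩ => ?_)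
  contrapose! hne
  rw [jacobiChar_natCast (hp.odd_of_ne_two hne)]

end PrimeMeanJacobi

section LinearAlgebra

variable {ι M : Type*} [Fintype ι] [AddCommGroup M] [Module (ZMod 2) M]

/-- Subsets of `ι` correspond to vectors over `ZMod 2` through their indicator functions. -/
def finsetEquivZModTwo (ι : Type*) [Fintype ι] [DecidableEq ι] : Finset ι ≃ (ι → ZMod 2) where
  toFun t i := if i ∈ t then 1 else 0
  invFun c := {i | c i = 1}
  left_inv t := by
    ext i
    simp
  right_inv c := by
    have hbit (a : ZMod 2) : (if a = 1 then 1 else 0) = a := by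
      revert a
      decide
    ext i
    simp [hbit]

theorem card_filter_sum_eq_zero_mul_two_pow_finrank [DecidableEq M] (v : ι → M) :
    (Finset.univ.filter fun t : Finset ι => ∑ i ∈ t, v i = 0).card *
      2 ^ Module.finrank (ZMod 2) (Submodule.span (ZMod 2) (range v)) = 2 ^ Fintype.card ι := by
  classical
  let L := Fintype.linearCombination (ZMod 2) v
  have hL (t : Finset ι) : L (finsetEquivZModTwo ι t) = ∑ i ∈ t, v i := by
    simp [L, Fintype.linearCombination_apply, finsetEquivZModTwo]
  have hcard : (Finset.univ.filter fun t : Finset ι => ∑ i ∈ t, v i = 0).card =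
      2 ^ Module.finrank (ZMod 2) (LinearMap.ker L) := by
    rw [← Fintype.card_subtype]
    refine Eq.trans ?_ ((Module.card_eq_pow_finrank (K := ZMod 2)).trans (by rw [ZMod.card]))
    refine Fintype.card_congr ((finsetEquivZModTwo ι).subtypeEquiv fun t => ?_)
    rw [LinearMap.mem_ker, hL]
  have hrank := LinearMap.finrank_range_add_finrank_ker L
  rw [Fintype.range_linearCombination, Module.finrank_fintype_fun_eq_card] at hrank
  rw [hcard, ← pow_add, add_comm, hrank]

end LinearAlgebra

section SquareProducts

variable {ι : Type*} {A : Finset ℕ} {z : ι → ℕ}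

/-- The multiplicities modulo 2 of the elements of `A`, usually primes, in `n`. -/
def parityVector (A : Finset ℕ) (n : ℕ) : A → ZMod 2 := fun q => n.factorization q

lemma isSquare_prod_iff_sum_parityVector_eq_zero {T : Finset ι} (hz : ∀ i ∈ T, z i ≠ 0)
    (hA : ∀ i ∈ T, ∀ q, Odd ((z i).factorization q) → q ∈ A) :
    IsSquare (∏ i ∈ T, z i) ↔ ∑ i ∈ T, parityVector A (z i) = 0 := by
  have hsum (q : A) : (∑ i ∈ T, parityVector A (z i)) q =
      ((∑ i ∈ T, (z i).factorization q : ℕ) : ZMod 2) := by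
    rw [Finset.sum_apply, Nat.cast_sum]
    rfl
  simp_rw [isSquare_iff_forall_even_factorization (Finset.prod_ne_zero_iff.2 hz), funext_iff, hsum,
    Pi.zero_apply, ZMod.natCast_eq_zero_iff_even, Nat.factorization_prod hz,
    Finsupp.finsetSum_apply]
  refine ⟨fun h q => h q, fun h q => ?_⟩
  by_cases hq : q ∈ A
  · exact h ⟨q, hq⟩
  · exact Finset.even_sum _ fun i hi => Nat.not_odd_iff_even.1 (mt (hA i hi q) hq)

end SquareProducts

section Nonresidues

variable {ι : Type*} [Fintype ι] {z : ι → ℕ}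

lemma prod_one_sub_jacobiSym (z : ι → ℕ) (p : ℕ) :
    ∏ i, (1 - (jacobiSym (z i) p : ℝ)) =
      ∑ T : Finset ι, (-1) ^ T.card * (jacobiSym (∏ i ∈ T, z i : ℕ) p : ℝ) := by
  have hcast (T : Finset ι) : (jacobiSym (∏ i ∈ T, z i : ℕ) p : ℝ) =
      ∏ i ∈ T, (jacobiSym (z i) p : ℝ) := by
    rw [← Int.cast_prod]
    refine congrArg Int.cast ?_
    rw [Nat.cast_prod]
    exact map_prod (⟨⟨fun a => jacobiSym a p, jacobiSym.one_left p⟩,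
      fun a b => jacobiSym.mul_left a b p⟩ : ℤ →* ℤ) (fun i => (z i : ℤ)) T
  simp_rw [sub_eq_add_neg, Finset.prod_one_add, Finset.powerset_univ, hcast, Finset.prod_neg]

open Classical in
theorem hasPrimeMean_prod_one_sub_jacobiSym (hz : ∀ i, z i ≠ 0)
    (hsq : ∀ T : Finset ι, Odd T.card → ¬ IsSquare (∏ i ∈ T, z i)) :
    HasPrimeMean (fun p => ∏ i, (1 - (jacobiSym (z i) p : ℝ)))
      (Finset.univ.filter fun T : Finset ι => IsSquare (∏ i ∈ T, z i)).card := by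
  simp_rw [prod_one_sub_jacobiSym, ← Finset.sum_boole]
  refine HasPrimeMean.sum fun T _ => ?_
  by_cases hT : IsSquare (∏ i ∈ T, z i)
  · have heven : Even T.card := Nat.not_odd_iff_even.1 fun hodd => hsq T hodd hT
    simpa only [heven.neg_one_pow, one_mul, if_pos hT] using
      hasPrimeMean_jacobiSym_of_isSquare (Finset.prod_ne_zero_iff.2 fun i _ => hz i) hT
  · simpa only [mul_zero, if_neg hT] using
      (hasPrimeMean_jacobiSym_of_not_isSquare hT).const_mul ((-1) ^ T.card)

/-- The odd primes modulo which every member of the family `z` is a quadratic nonresidue. -/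
def nonresiduePrimes (z : ι → ℕ) : Set ℕ :=
  {p | ∃ _ : Fact p.Prime, p ≠ 2 ∧ ∀ i, legendreSym p (z i) = -1}

lemma prod_one_sub_jacobiSym_eq_indicator {p : ℕ} (hp : p.Prime) (hp2 : p ≠ 2)
    (hpz : ∀ i, ¬ p ∣ z i) :
    ∏ i, (1 - (jacobiSym (z i) p : ℝ)) =
      2 ^ Fintype.card ι * (nonresiduePrimes z).indicator 1 p := by
  have : Fact p.Prime := ⟨hp⟩
  simp_rw [← jacobiSym.legendreSym.to_jacobiSym]
  by_cases hmem : p ∈ nonresiduePrimes z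
  · obtain ⟨_, _, hall⟩ := id hmem
    simp_rw [indicator_of_mem hmem, hall]
    norm_num
  · obtain ⟨i, hi⟩ : ∃ i, legendreSym p (z i) ≠ -1 := by
      by_contra! hall
      exact hmem ⟨this, hp2, hall⟩
    have hne : ((z i : ℤ) : ZMod p) ≠ 0 := by
      rw [Int.cast_natCast, Ne, ZMod.natCast_eq_zero_iff]
      exact hpz i
    have hone := (legendreSym.eq_one_or_neg_one p hne).resolve_right hi
    rw [indicator_of_notMem hmem, mul_zero]
    exact Finset.prod_eq_zero (Finset.mem_univ i) (by rw [hone, Int.cast_one, sub_self])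

open Classical in
theorem hasPrimeMean_nonresiduePrimes_card_isSquare (hz : ∀ i, z i ≠ 0)
    (hsq : ∀ T : Finset ι, Odd T.card → ¬ IsSquare (∏ i ∈ T, z i)) :
    HasPrimeMean ((nonresiduePrimes z).indicator 1)
      ((2 ^ Fintype.card ι)⁻¹ *
        (Finset.univ.filter fun T : Finset ι => IsSquare (∏ i ∈ T, z i)).card) := by
  refine ((hasPrimeMean_prod_one_sub_jacobiSym hz hsq).const_mul _).congr
    ((2 * ∏ i, z i).primeFactors.finite_toSet.subset fun p ⟨hp, hne⟩ => ?_)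
  refine Nat.mem_primeFactors.2 ⟨hp, ?_, mul_ne_zero two_ne_zero
    (Finset.prod_ne_zero_iff.2 fun i _ => hz i)⟩
  contrapose! hne
  have hp2 : p ≠ 2 := fun h => hne (h ▸ dvd_mul_right _ _)
  have hpz (i : ι) : ¬ p ∣ z i := fun h =>
    hne ((h.trans (Finset.dvd_prod_of_mem z (Finset.mem_univ i))).mul_left 2)
  rw [prod_one_sub_jacobiSym_eq_indicator hp hp2 hpz, inv_mul_cancel_left₀ (by positivity)]

end Nonresidues

theorem hasPrimeMean_nonresiduePrimes {ι : Type*} [Finite ι] {z : ι → ℕ} (hz : ∀ i, z i ≠ 0)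
    (hsq : ∀ T : Finset ι, Odd T.card → ¬ IsSquare (∏ i ∈ T, z i)) {A : Finset ℕ}
    (hA : ∀ i q, Odd ((z i).factorization q) → q ∈ A) :
    HasPrimeMean ((nonresiduePrimes z).indicator 1)
      (2 ^ (-(Module.finrank (ZMod 2) (Submodule.span (ZMod 2)
        (range fun i => parityVector A (z i))) : ℤ))) := by
  classical
  cases nonempty_fintype ι
  convert hasPrimeMean_nonresiduePrimes_card_isSquare hz hsq
  have hcard := card_filter_sum_eq_zero_mul_two_pow_finrank fun i => parityVector A (z i)
  simp_rw [← isSquare_prod_iff_sum_parityVector_eq_zero (fun i _ => hz i) fun i _ => hA i] at hcard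
  rw [zpow_neg, zpow_natCast, inv_mul_eq_div, eq_div_iff (by positivity),
    inv_mul_eq_iff_eq_mul₀ (by positivity), mul_comm]
  exact_mod_cast hcard.symm

/-- Theorem 5.14: if `S` is a nonempty finite set of positive integers such that the product of
the elements of every odd-cardinality subset of `S` is not a square, `A` the set of primes
dividing some element of `S` with odd multiplicity, and `d` the GF(2)-dimension of the span of
the mod-2 multiplicity vectors of the elements of `S` in `GF(2)^A`, then the set of (odd) primes
`p` for which `S` is a set of quadratic non-residues has natural density `2 ^ (-d)` in the
primes. -/
theorem density_setOf_forall_legendreSym_eq_neg_one (S : Finset ℕ) (hS : S.Nonempty)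
    (hpos : ∀ z ∈ S, 0 < z)
    (hsq : ∀ T ⊆ S, Odd T.card → ¬ IsSquare (∏ z ∈ T, z))
    (A : Finset ℕ) (hA : ∀ q : ℕ, q ∈ A ↔ q.Prime ∧ ∃ z ∈ S, Odd (Nat.factorization z q))
    (d : ℕ)
    (hd : d = Module.finrank (ZMod 2) ↥(Submodule.span (ZMod 2)
      ((fun z : ℕ => fun q : {q : ℕ // q ∈ A} => ((Nat.factorization z q.1 : ℕ) : ZMod 2)) ''
        (S : Set ℕ)))) :
    Filter.Tendsto (fun x : ℕ =>
        (({p : ℕ | (∃ hp : Fact p.Prime, p ≠ 2 ∧ ∀ z ∈ S, @legendreSym p hp (z : ℤ) = -1) ∧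
            p ≤ x}.ncard : ℝ)) / ({p : ℕ | p.Prime ∧ p ≤ x}.ncard : ℝ))
      Filter.atTop (nhds ((2 : ℝ) ^ (-(d : ℤ)))) := by
  have hsqS (T : Finset S) (hT : Odd T.card) : ¬ IsSquare (∏ i ∈ T, (i : ℕ)) := by
    have hmap := hsq (T.map (.subtype _)) (Finset.map_subtype_subset T) (by rwa [Finset.card_map])
    rwa [Finset.prod_map] at hmap
  have hAS (i : S) (q : ℕ) (hodd : Odd ((i : ℕ).factorization q)) : q ∈ A := by
    refine (hA q).2 ⟨by_contra fun hq => ?_, i, i.2, hodd⟩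
    rw [Nat.factorization_eq_zero_of_not_prime _ hq] at hodd
    exact Nat.not_odd_zero hodd
  have hprimes : nonresiduePrimes (fun i : S => (i : ℕ)) =
      {p | ∃ _ : Fact p.Prime, p ≠ 2 ∧ ∀ z ∈ S, legendreSym p z = -1} := by
    simp only [nonresiduePrimes, Subtype.forall]
  have hmean := hasPrimeMean_nonresiduePrimes (fun i : S => (hpos i i.2).ne') hsqS hAS
  rw [hprimes] at hmean
  rw [hd, image_eq_range]
  exact hmean.tendsto_ncard_div fun p hp => hp.choose.out
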